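/- For every natural number j, the element s·r^(2j+1) of G has order exactly 4. -/

import Mathlib

/-- If the involution `s` conjugates `r` to `r ^ (M - 1)`, then `(s * r ^ m) ^ 2 = r ^ (M * m)`. -/
theorem sq_mul_pow_of_conj_eq_pow {G : Type*} [Group G] {r s : G} {M : ℕ} (hM : 0 < M)
    (hs : s ^ 2 = 1) (hrs : s * r * s⁻¹ = r ^ (M - 1)) (m : ℕ) :
    (s * r ^ m) ^ 2 = r ^ (M * m) := by
  have hinv : s⁻¹ = s := inv_eq_of_mul_eq_one_left (by rw [← sq, hs])
  calc (s * r ^ m) ^ 2 = s * r ^ m * s⁻¹ * r ^ m := by rw [hinv, sq]; group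
    _ = (r ^ (M - 1)) ^ m * r ^ m := by rw [← conj_pow, hrs]
    _ = r ^ (M * m) := by
      rw [← pow_mul, ← pow_add, ← Nat.succ_mul, Nat.succ_eq_add_one, Nat.sub_add_cancel hM]

theorem order_of_s_mul_r_odd_pow {G : Type*} [Group G] [Fintype G] (k p : ℕ) (hk : 2 ≤ k)
    (hp : p.Prime) (hp2 : p ≠ 2) (hcard : Fintype.card G = 2 ^ (k + 1) * p)
    (r s : G) (hr : orderOf r = 2 ^ k * p) (hs : orderOf s = 2)
    (hrs : s * r * s⁻¹ = r ^ (2 ^ (k - 1) * p - 1))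
    (hgen : Subgroup.closure ({r, s} : Set G) = ⊤) :
    ∀ j : ℕ, orderOf (s * r ^ (2 * j + 1)) = 4 := by
  intro j
  have hM : 0 < 2 ^ (k - 1) * p := Nat.mul_pos (by positivity) hp.pos
  have hord : orderOf r = 2 ^ (k - 1) * p * 2 := by
    obtain ⟨n, rfl⟩ : ∃ n, k = n + 1 := ⟨k - 1, by omega⟩
    rw [hr, Nat.add_sub_cancel]
    ring
  have hsq := sq_mul_pow_of_conj_eq_pow hM (hs ▸ pow_orderOf_eq_one s) hrs (2 * j + 1)
  have h4 : orderOf (s * r ^ (2 * j + 1)) = 2 ^ (1 + 1) := by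
    apply orderOf_eq_prime_pow
    · rw [pow_one, hsq, ← orderOf_dvd_iff_pow_eq_one, hord, Nat.mul_dvd_mul_iff_left hM]
      omega
    · rw [pow_succ 2 1, pow_one, pow_mul, hsq, ← pow_mul, ← orderOf_dvd_iff_pow_eq_one, hord]
      exact ⟨2 * j + 1, by ring⟩
  exact h4
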